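/- There exists a universal constant C₂ > 0 with the following property. Let α be an irrational real number, δ > 0, N ≥ 1 an integer, and let f : B_δ → ℂ be a bounded holomorphic 1-periodic function with ∫₀¹ f(x) dx = 0. Then the trigonometric polynomial g(θ) = ∑_{0<|n|≤N} f̂(n) e^{2πinθ}/(1 − e^{2πinα}) satisfies g(θ) − g(θ+α) = f|_N(θ) for all θ, and one has the bounds ‖g‖_{B_δ} ≤ C₂ N Γ_α(N) ‖f‖_{B_δ} and ‖∂_θ g‖_{B_δ} ≤ C₂ N² Γ_α(N) ‖f‖_{B_δ}. -/

import Mathlib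

noncomputable def distNearestInt (x : ℝ) : ℝ := |x - round x|

noncomputable def GammaA (α : ℝ) (N : ℕ) : ℝ :=
  sSup ((fun n : ℤ => (distNearestInt ((n : ℝ) * α))⁻¹) '' {n : ℤ | n ≠ 0 ∧ |n| ≤ (N : ℤ)})

noncomputable def GammaAB (α β : ℝ) (N : ℕ) : ℝ :=
  sSup ((fun n : ℤ => (distNearestInt ((n : ℝ) * α - β))⁻¹) '' {n : ℤ | |n| ≤ (N : ℤ)})

def IsNonRationalPair (α β : ℝ) : Prop := ∀ k m : ℤ, (k : ℝ) * α - β ≠ (m : ℝ)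

def BrjunoCond (α : ℝ) : Prop :=
  Summable (fun N : ℕ => Real.log (GammaA α (N + 1)) / ((N : ℝ) + 1) ^ 2)

def Strip (δ : ℝ) : Set ℂ := {θ : ℂ | |θ.im| < δ}

noncomputable def supNorm (f : ℂ → ℂ) (s : Set ℂ) : ℝ := sSup ((fun z => ‖f z‖) '' s)

noncomputable def fCoeff (f : ℂ → ℂ) (n : ℤ) : ℂ :=
  ∫ x in (0:ℝ)..1, f x * Complex.exp (-(2 * Real.pi * Complex.I * n * x))

/-- The truncation of f up to order N. -/
noncomputable def truncN (f : ℂ → ℂ) (N : ℕ) (θ : ℂ) : ℂ :=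
  ∑ n ∈ Finset.Icc (-(N : ℤ)) (N : ℤ), fCoeff f n * Complex.exp (2 * Real.pi * Complex.I * n * θ)

/-!
Moving the contour of the integral defining `f̂(n)` to the horizontal line through `θ` cancels the
growth of `e^{2πinθ}`, so every Fourier mode of `f` is bounded by `‖f‖` on the strip. The
solution `g` arises by multiplying the `2N` modes with `0 < |n| ≤ N` by `1 / (1 - e^{2πinα})`, and
`∂g` by the further factor `2πin`, of size at most `2πN`. Since `|1 - e^{2πix}| = 2 |sin πx|` is at
least four times the distance from `x` to `ℤ`, the divisors cost at most `Γ_α(N) / 4`.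
-/

section

open Complex Finset
open scoped Real Interval

theorem integral_add_mul_I_eq_of_vertical_edges_eq {E : Type*} [NormedAddCommGroup E]
    [NormedSpace ℂ E] {F : ℂ → E} {a b s t : ℝ}
    (hF : DifferentiableOn ℂ F ([[a, b]] ×ℂ [[s, t]]))
    (hedge : ∀ y ∈ [[s, t]], F (a + y * I) = F (b + y * I)) :
    ∫ x in a..b, F (x + s * I) = ∫ x in a..b, F (x + t * I) := by
  have hrect := integral_boundary_rect_eq_zero_of_differentiableOn F (a + s * I) (b + t * I)
    (by simpa using hF)
  have hvert : ∫ y in s..t, F (a + y * I) = ∫ y in s..t, F (b + y * I) :=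
    intervalIntegral.integral_congr hedge
  simpa [hvert, sub_eq_zero] using hrect

theorem exp_neg_two_pi_mul_I_mul_int_add_one (n : ℤ) (z : ℂ) :
    exp (-(2 * π * I * n * (z + 1))) = exp (-(2 * π * I * n * z)) :=
  exp_eq_exp_iff_exists_int.2 ⟨-n, by push_cast; ring⟩

theorem fCoeff_eq_integral_add_mul_I {δ : ℝ} {f : ℂ → ℂ} (hf : DifferentiableOn ℂ f (Strip δ))
    (hper : ∀ θ ∈ Strip δ, f (θ + 1) = f θ) (n : ℤ) {t : ℝ} (ht : |t| < δ) :
    fCoeff f n =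
      ∫ x in (0 : ℝ)..1, f (x + t * I) * exp (-(2 * π * I * n * (x + t * I))) := by
  have him : ∀ y ∈ [[0, t]], |y| < δ := fun y hy =>
    (by simpa using Set.abs_sub_left_of_mem_uIcc hy : |y| ≤ |t|).trans_lt ht
  have hF : DifferentiableOn ℂ (fun z => f z * exp (-(2 * π * I * n * z))) (Strip δ) :=
    hf.mul (by fun_prop)
  have hshift := integral_add_mul_I_eq_of_vertical_edges_eq (a := 0) (b := 1) (s := 0) (t := t)
    (hF.mono fun z hz => him z.im (mem_reProdIm.1 hz).2) fun y hy => ?_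
  · simpa [fCoeff] using hshift
  · have hmem : (y * I : ℂ) ∈ Strip δ := by simpa [Strip] using him y hy
    rw [ofReal_zero, zero_add, ofReal_one, add_comm 1, hper _ hmem,
      exp_neg_two_pi_mul_I_mul_int_add_one]

theorem norm_fCoeff_mul_exp_le {δ M : ℝ} {f : ℂ → ℂ} (hf : DifferentiableOn ℂ f (Strip δ))
    (hper : ∀ θ ∈ Strip δ, f (θ + 1) = f θ) (n : ℤ) {θ : ℂ} (hθ : θ ∈ Strip δ)
    (hM : ∀ x : ℝ, ‖f (x + θ.im * I)‖ ≤ M) :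
    ‖fCoeff f n * exp (2 * π * I * n * θ)‖ ≤ M := by
  have hexp (x : ℝ) :
      ‖exp (-(2 * π * I * n * (x + θ.im * I))) * exp (2 * π * I * n * θ)‖ = 1 := by
    rw [← exp_add, norm_exp, Real.exp_eq_one_iff]
    simp
  rw [fCoeff_eq_integral_add_mul_I hf hper n hθ, ← intervalIntegral.integral_mul_const]
  refine (intervalIntegral.norm_integral_le_of_norm_le_const fun x _ => ?_).trans_eq
    (by simp : M * |(1 : ℝ) - 0| = M)
  rw [mul_assoc, norm_mul, hexp, mul_one]
  exact hM x

theorem le_supNorm {f : ℂ → ℂ} {s : Set ℂ} (hf : BddAbove ((fun z => ‖f z‖) '' s)) {z : ℂ}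
    (hz : z ∈ s) : ‖f z‖ ≤ supNorm f s :=
  le_csSup hf ⟨z, hz, rfl⟩

theorem supNorm_nonneg (f : ℂ → ℂ) (s : Set ℂ) : 0 ≤ supNorm f s :=
  Real.sSup_nonneg (Set.forall_mem_image.2 fun z _ => norm_nonneg (f z))

theorem supNorm_le {f : ℂ → ℂ} {s : Set ℂ} {M : ℝ} (hs : s.Nonempty) (h : ∀ z ∈ s, ‖f z‖ ≤ M) :
    supNorm f s ≤ M :=
  csSup_le (hs.image _) (Set.forall_mem_image.2 h)

theorem GammaA_nonneg (α : ℝ) (N : ℕ) : 0 ≤ GammaA α N :=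
  Real.sSup_nonneg (Set.forall_mem_image.2 fun _ _ => inv_nonneg.2 (abs_nonneg _))

theorem inv_distNearestInt_le_GammaA (α : ℝ) {N : ℕ} {n : ℤ} (hn : n ≠ 0) (hnN : |n| ≤ N) :
    (distNearestInt (n * α))⁻¹ ≤ GammaA α N := by
  have hfin : {m : ℤ | m ≠ 0 ∧ |m| ≤ N}.Finite :=
    (Set.finite_Icc (-(N : ℤ)) N).subset fun m hm => abs_le.1 hm.2
  exact le_csSup (hfin.image _).bddAbove ⟨n, ⟨hn, hnN⟩, rfl⟩

theorem distNearestInt_pos {x : ℝ} (hx : ∀ m : ℤ, x ≠ m) : 0 < distNearestInt x :=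
  abs_pos.2 (sub_ne_zero.2 (hx _))

theorem norm_one_sub_exp_two_pi_mul_I_mul (x : ℝ) :
    ‖1 - exp (2 * π * I * x)‖ = 2 * |Real.sin (π * x)| := by
  rw [norm_sub_rev, show (2 * π * I * x : ℂ) = I * (2 * π * x : ℝ) by push_cast; ring,
    norm_exp_I_mul_ofReal_sub_one, norm_mul, Real.norm_eq_abs, Real.norm_eq_abs, abs_two,
    show 2 * π * x / 2 = π * x by ring]

theorem two_mul_distNearestInt_le_abs_sin (x : ℝ) :
    2 * distNearestInt x ≤ |Real.sin (π * x)| := by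
  have hperiod : |Real.sin (π * (x - round x))| = |Real.sin (π * x)| := by
    rw [mul_sub, mul_comm π (round x : ℝ), Real.sin_sub_int_mul_pi, abs_mul,
      abs_neg_one_zpow, one_mul]
  have hsmall : |π * (x - round x)| ≤ π / 2 := by
    rw [abs_mul, abs_of_pos Real.pi_pos]
    nlinarith [abs_sub_round x, Real.pi_pos]
  calc 2 * distNearestInt x = 2 / π * |π * (x - round x)| := by
        rw [abs_mul, abs_of_pos Real.pi_pos, ← mul_assoc, div_mul_cancel₀ _ Real.pi_ne_zero,
          distNearestInt]
    _ ≤ |Real.sin (π * x)| := hperiod ▸ Real.mul_abs_le_abs_sin hsmall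

theorem four_mul_distNearestInt_le_norm_one_sub_exp (n : ℤ) (α : ℝ) :
    4 * distNearestInt (n * α) ≤ ‖1 - exp (2 * π * I * n * α)‖ := by
  have hnorm := norm_one_sub_exp_two_pi_mul_I_mul (n * α)
  push_cast at hnorm
  rw [mul_assoc _ (n : ℂ), hnorm]
  linarith [two_mul_distNearestInt_le_abs_sin (n * α)]

theorem one_sub_exp_ne_zero {α : ℝ} {n : ℤ} (hα : ∀ m : ℤ, n * α ≠ m) :
    1 - exp (2 * π * I * n * α) ≠ 0 :=
  norm_pos_iff.1 <| (mul_pos four_pos (distNearestInt_pos hα)).trans_le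
    (four_mul_distNearestInt_le_norm_one_sub_exp n α)

theorem norm_inv_one_sub_exp_le {α : ℝ} {N : ℕ} {n : ℤ} (hn : n ≠ 0) (hnN : |n| ≤ N)
    (hα : ∀ m : ℤ, n * α ≠ m) :
    ‖(1 - exp (2 * π * I * n * α))⁻¹‖ ≤ GammaA α N / 4 := by
  calc ‖(1 - exp (2 * π * I * n * α))⁻¹‖ ≤ (4 * distNearestInt (n * α))⁻¹ := by
        rw [norm_inv]
        exact inv_anti₀ (mul_pos four_pos (distNearestInt_pos hα))
          (four_mul_distNearestInt_le_norm_one_sub_exp n α)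
    _ = (distNearestInt (n * α))⁻¹ / 4 := by rw [mul_inv_rev, div_eq_mul_inv]
    _ ≤ GammaA α N / 4 := by gcongr; exact inv_distNearestInt_le_GammaA α hn hnN

/-- The trigonometric polynomial on `ℂ` with frequencies in `S` and coefficients `c`. -/
noncomputable def trigPoly (c : ℤ → ℂ) (S : Finset ℤ) (θ : ℂ) : ℂ :=
  ∑ n ∈ S, c n * exp (2 * π * I * n * θ)

theorem trigPoly_sub_trigPoly_add (c : ℤ → ℂ) (S : Finset ℤ) (θ α : ℂ) :
    trigPoly c S θ - trigPoly c S (θ + α) =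
      trigPoly (fun n => (1 - exp (2 * π * I * n * α)) * c n) S θ := by
  simp only [trigPoly, ← sum_sub_distrib, mul_add, exp_add]
  exact sum_congr rfl fun n _ => by ring

theorem hasDerivAt_trigPoly (c : ℤ → ℂ) (S : Finset ℤ) (θ : ℂ) :
    HasDerivAt (trigPoly c S) (trigPoly (fun n => 2 * π * I * n * c n) S θ) θ := by
  refine HasDerivAt.fun_sum fun n _ => ?_
  have hmode := ((hasDerivAt_id' θ).const_mul (2 * π * I * n : ℂ)).cexp.const_mul (c n)
  exact hmode.congr_deriv (by ring)

theorem norm_trigPoly_mul_le {m c : ℤ → ℂ} {S : Finset ℤ} {θ : ℂ} {A B : ℝ} (hA : 0 ≤ A)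
    (hm : ∀ n ∈ S, ‖m n‖ ≤ A) (hc : ∀ n ∈ S, ‖c n * exp (2 * π * I * n * θ)‖ ≤ B) :
    ‖trigPoly (fun n => m n * c n) S θ‖ ≤ #S * (A * B) := by
  rw [← nsmul_eq_mul, ← sum_const]
  refine norm_sum_le_of_le S fun n hn => ?_
  rw [mul_assoc, norm_mul]
  exact mul_le_mul (hm n hn) (hc n hn) (norm_nonneg _) hA

/-- The frequencies `0 < |n| ≤ N`. -/
noncomputable def nonzeroFreqs (N : ℕ) : Finset ℤ := (Icc (-(N : ℤ)) N).erase 0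

theorem mem_nonzeroFreqs {N : ℕ} {n : ℤ} : n ∈ nonzeroFreqs N ↔ n ≠ 0 ∧ |n| ≤ N := by
  rw [nonzeroFreqs, mem_erase, mem_Icc, abs_le]

theorem card_nonzeroFreqs (N : ℕ) : #(nonzeroFreqs N) = 2 * N := by
  rw [nonzeroFreqs, card_erase_of_mem (by simp), Int.card_Icc]
  omega

theorem truncN_eq_trigPoly {f : ℂ → ℂ} (hmean : ∫ x in (0 : ℝ)..1, f x = 0) (N : ℕ) (θ : ℂ) :
    truncN f N θ = trigPoly (fCoeff f) (nonzeroFreqs N) θ := by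
  have hzero : fCoeff f 0 = 0 := by simpa [fCoeff] using hmean
  rw [truncN, ← add_sum_erase _ _ (show (0 : ℤ) ∈ Icc (-(N : ℤ)) N by simp), hzero, zero_mul,
    zero_add, trigPoly, nonzeroFreqs]

/-- The solution `g` of the truncated cohomological equation `g(θ) - g(θ + α) = f|_N(θ)`, obtained
by dividing each Fourier mode of `f` with `0 < |n| ≤ N` by `1 - e^{2πinα}`. -/
noncomputable def cohomologicalSolution (f : ℂ → ℂ) (α : ℝ) (N : ℕ) (θ : ℂ) : ℂ :=
  ∑ n ∈ nonzeroFreqs N,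
    fCoeff f n * exp (2 * π * I * n * θ) / (1 - exp (2 * π * I * n * α))

theorem cohomologicalSolution_eq_trigPoly (f : ℂ → ℂ) (α : ℝ) (N : ℕ) :
    cohomologicalSolution f α N =
      trigPoly (fun n => (1 - exp (2 * π * I * n * α))⁻¹ * fCoeff f n) (nonzeroFreqs N) :=
  funext fun _ => sum_congr rfl fun _ _ => by ring

theorem deriv_cohomologicalSolution (f : ℂ → ℂ) (α : ℝ) (N : ℕ) (θ : ℂ) :
    deriv (cohomologicalSolution f α N) θ =
      trigPoly (fun n => 2 * π * I * n * (1 - exp (2 * π * I * n * α))⁻¹ * fCoeff f n)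
        (nonzeroFreqs N) θ := by
  rw [cohomologicalSolution_eq_trigPoly, (hasDerivAt_trigPoly _ _ θ).deriv]
  simp only [mul_assoc]

variable {α : ℝ} {N : ℕ} {f : ℂ → ℂ}

theorem cohomologicalSolution_sub_shift
    (hα : ∀ n : ℤ, n ≠ 0 → |n| ≤ N → ∀ m : ℤ, n * α ≠ m)
    (hmean : ∫ x in (0 : ℝ)..1, f x = 0) (θ : ℂ) :
    cohomologicalSolution f α N θ - cohomologicalSolution f α N (θ + α) = truncN f N θ := by
  rw [cohomologicalSolution_eq_trigPoly, trigPoly_sub_trigPoly_add, truncN_eq_trigPoly hmean]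
  refine sum_congr rfl fun n hn => ?_
  obtain ⟨hn0, hnN⟩ := mem_nonzeroFreqs.1 hn
  simp only [mul_inv_cancel_left₀ (one_sub_exp_ne_zero (hα n hn0 hnN))]

theorem norm_cohomologicalSolution_le {M : ℝ} {θ : ℂ}
    (hα : ∀ n : ℤ, n ≠ 0 → |n| ≤ N → ∀ m : ℤ, n * α ≠ m)
    (hM : ∀ n : ℤ, ‖fCoeff f n * exp (2 * π * I * n * θ)‖ ≤ M) :
    ‖cohomologicalSolution f α N θ‖ ≤ N / 2 * GammaA α N * M := by
  rw [cohomologicalSolution_eq_trigPoly]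
  refine (norm_trigPoly_mul_le (A := GammaA α N / 4) (by linarith [GammaA_nonneg α N])
    (fun n hn => ?_) fun n _ => hM n).trans_eq ?_
  · obtain ⟨hn0, hnN⟩ := mem_nonzeroFreqs.1 hn
    exact norm_inv_one_sub_exp_le hn0 hnN (hα n hn0 hnN)
  · rw [card_nonzeroFreqs]
    push_cast
    ring

theorem norm_deriv_cohomologicalSolution_le {M : ℝ} {θ : ℂ}
    (hα : ∀ n : ℤ, n ≠ 0 → |n| ≤ N → ∀ m : ℤ, n * α ≠ m)
    (hM : ∀ n : ℤ, ‖fCoeff f n * exp (2 * π * I * n * θ)‖ ≤ M) :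
    ‖deriv (cohomologicalSolution f α N) θ‖ ≤ π * N ^ 2 * GammaA α N * M := by
  have hΓ := GammaA_nonneg α N
  rw [deriv_cohomologicalSolution]
  refine (norm_trigPoly_mul_le (A := 2 * π * N * (GammaA α N / 4)) (by positivity)
    (fun n hn => ?_) fun n _ => hM n).trans_eq ?_
  · obtain ⟨hn0, hnN⟩ := mem_nonzeroFreqs.1 hn
    have hfreq : ‖(2 * π * I * n : ℂ)‖ ≤ 2 * π * N := by
      have hnN' : |(n : ℝ)| ≤ N := mod_cast hnN
      simpa [abs_of_pos Real.pi_pos] using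
        mul_le_mul_of_nonneg_left hnN' Real.two_pi_pos.le
    rw [norm_mul]
    exact mul_le_mul hfreq (norm_inv_one_sub_exp_le hn0 hnN (hα n hn0 hnN)) (norm_nonneg _)
      (by positivity)
  · rw [card_nonzeroFreqs]
    push_cast
    ring

theorem stmt_7_general :
    ∃ C₂ : ℝ, 0 < C₂ ∧
      ∀ (α δ : ℝ) (N : ℕ), 0 < δ → (∀ n : ℤ, n ≠ 0 → |n| ≤ N → ∀ m : ℤ, n * α ≠ m) →
        ∀ f : ℂ → ℂ,
          DifferentiableOn ℂ f (Strip δ) →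
          (∀ θ ∈ Strip δ, f (θ + 1) = f θ) →
          BddAbove ((fun z => ‖f z‖) '' Strip δ) →
          ∫ x in (0 : ℝ)..1, f x = 0 →
          ∀ g : ℂ → ℂ,
            (g = fun θ => ∑ n ∈ (Icc (-(N : ℤ)) N).erase 0,
                fCoeff f n * exp (2 * π * I * n * θ) / (1 - exp (2 * π * I * n * α))) →
            (∀ θ : ℂ, g θ - g (θ + α) = truncN f N θ) ∧
              supNorm g (Strip δ) ≤ C₂ * N * GammaA α N * supNorm f (Strip δ) ∧
              supNorm (deriv g) (Strip δ) ≤ C₂ * N ^ 2 * GammaA α N * supNorm f (Strip δ) := by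
  refine ⟨π, Real.pi_pos, ?_⟩
  rintro α δ N hδ hα f hf hper hbdd hmean _ rfl
  have hstrip : (Strip δ).Nonempty := ⟨0, by simpa [Strip] using hδ⟩
  have hΓ := GammaA_nonneg α N
  have hsup := supNorm_nonneg f (Strip δ)
  have hmode : ∀ θ ∈ Strip δ, ∀ n : ℤ,
      ‖fCoeff f n * exp (2 * π * I * n * θ)‖ ≤ supNorm f (Strip δ) := fun θ hθ n =>
    norm_fCoeff_mul_exp_le hf hper n hθ fun x => le_supNorm hbdd (by simpa [Strip] using hθ)
  refine ⟨cohomologicalSolution_sub_shift hα hmean,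
    supNorm_le hstrip fun θ hθ => ?_,
    supNorm_le hstrip fun θ hθ => norm_deriv_cohomologicalSolution_le hα (hmode θ hθ)⟩
  refine (norm_cohomologicalSolution_le hα (hmode θ hθ)).trans ?_
  gcongr
  nlinarith [Real.pi_gt_three, show (0 : ℝ) ≤ N from N.cast_nonneg]

end

/-- solution and estimates for the truncated cohomological equation
g(θ) − g(θ+α) = f|_N(θ), for zero-mean f. -/
theorem stmt_7 :
    ∃ C₂ : ℝ, 0 < C₂ ∧
      ∀ (α : ℝ), Irrational α →
        ∀ (δ : ℝ), 0 < δ →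
          ∀ (N : ℕ), 1 ≤ N →
            ∀ f : ℂ → ℂ,
              DifferentiableOn ℂ f (Strip δ) →
              (∀ θ ∈ Strip δ, f (θ + 1) = f θ) →
              BddAbove ((fun z => ‖f z‖) '' Strip δ) →
              (∫ x in (0:ℝ)..1, f x) = 0 →
              ∀ g : ℂ → ℂ,
                (g = fun θ => ∑ n ∈ (Finset.Icc (-(N : ℤ)) (N : ℤ)).erase 0,
                    fCoeff f n * Complex.exp (2 * Real.pi * Complex.I * n * θ) /
                      (1 - Complex.exp (2 * Real.pi * Complex.I * n * α))) →
                (∀ θ : ℂ, g θ - g (θ + α) = truncN f N θ) ∧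
                  supNorm g (Strip δ) ≤ C₂ * N * GammaA α N * supNorm f (Strip δ) ∧
                  supNorm (deriv g) (Strip δ) ≤ C₂ * N ^ 2 * GammaA α N * supNorm f (Strip δ) := by
  obtain ⟨C, hC, h⟩ := stmt_7_general
  exact ⟨C, hC, fun α hα δ hδ N _ => h α δ N hδ fun n hn _ m => (hα.intCast_mul hn).ne_int m⟩
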